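/- Let d ≥ 1, q > 0, k ∈ ℕ, and let C ∈ ℝ^{d×d} be symmetric positive definite. If the random vector u ∈ ℝ^d has the multivariate q-exponential density p(u) = (q/2)(2π)^{−d/2} det(C)^{−1/2} r(u)^{(q/2−1)(d/2)} exp{−(1/2) r(u)^{q/2}} with r(u) = uᵀ C^{−1} u, and R = r(u)^{1/2}, then the k-th moment of R equals E[R^k] = ∫_{ℝ^d} (uᵀ C^{−1} u)^{k/2} p(u) du = 2^{k/q} Γ(d/2 + k/q) / Γ(d/2). -/

import Mathlib

open Real MeasureTheory Matrix

open scoped MatrixOrder in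
lemma qED_factor {d : ℕ} (C : Matrix (Fin d) (Fin d) ℝ) (hC : C.PosDef) :
    ∃ B : Matrix (Fin d) (Fin d) ℝ, C⁻¹ = Bᵀ * B := by
  obtain ⟨B, hB⟩ := CStarAlgebra.nonneg_iff_eq_star_mul_self.mp hC.inv.posSemidef.nonneg
  exact ⟨B, by simpa [star_eq_conjTranspose] using hB⟩

lemma qED_change {d : ℕ} (C : Matrix (Fin d) (Fin d) ℝ) (hC : C.PosDef) (F : ℝ → ℝ) :
    ∫ u : Fin d → ℝ, F (u ⬝ᵥ (C⁻¹ *ᵥ u)) =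
      C.det ^ ((1 : ℝ) / 2) * ∫ x : EuclideanSpace ℝ (Fin d), F (‖x‖ ^ 2) := by
  obtain ⟨B, hB⟩ := qED_factor C hC
  have hdet : C.det⁻¹ = B.det ^ 2 := by
    have := congrArg Matrix.det hB
    rw [det_mul, det_transpose, det_nonsing_inv, Ring.inverse_eq_inv'] at this
    rw [this]; ring
  have hCp := hC.det_pos
  have hBd : B.det ≠ 0 := by
    intro h
    rw [h] at hdet
    have := inv_pos.mpr hCp
    simp at hdet
    linarith
  have hs : C.det ^ ((1 : ℝ) / 2) = |B.det⁻¹| := by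
    rw [← Real.sqrt_eq_rpow, ← Real.sqrt_sq_eq_abs]
    congr 1
    rw [inv_pow, ← hdet, inv_inv]
  have h1 : ∀ u : Fin d → ℝ, u ⬝ᵥ (C⁻¹ *ᵥ u) = (toLin' B u) ⬝ᵥ (toLin' B u) := by
    intro u
    rw [hB, toLin'_apply, ← mulVec_mulVec, dotProduct_mulVec, vecMul_transpose]
  have hinj : Function.Injective (toLin' B) := by
    have : Function.Injective B.mulVec :=
      Matrix.mulVec_injective_of_isUnit ((Matrix.isUnit_iff_isUnit_det B).2 hBd.isUnit)
    intro x y hxy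
    exact this (by simpa using hxy)
  have hemb : MeasurableEmbedding (toLin' B) :=
    (LinearMap.continuous_of_finiteDimensional (toLin' B)).measurable.measurableEmbedding hinj
  simp_rw [h1]
  rw [← hemb.integral_map (fun v => F (v ⬝ᵥ v)),
    Real.map_matrix_volume_pi_eq_smul_volume_pi hBd, integral_smul_measure,
    ENNReal.toReal_ofReal (abs_nonneg _), smul_eq_mul, hs]
  congr 1
  rw [← (PiLp.volume_preserving_toLp (Fin d)).integral_comp
    (MeasurableEquiv.toLp 2 (Fin d → ℝ)).measurableEmbedding]
  refine integral_congr_ae (.of_forall fun v => ?_)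
  simp only [EuclideanSpace.real_norm_sq_eq, dotProduct, ← sq]

/-- If `u` has the multivariate q-exponential density `q-ED_d(0, C)` and
`R = r(u)^{1/2}`, then `E[R^k] = 2^{k/q} Γ(d/2 + k/q) / Γ(d/2)`. -/
theorem qED_radial_moments
    (d : ℕ) (hd : 1 ≤ d) (q : ℝ) (hq : 0 < q) (k : ℕ)
    (C : Matrix (Fin d) (Fin d) ℝ) (hC : C.PosDef) :
    ∫ u : Fin d → ℝ,
      (u ⬝ᵥ (C⁻¹ *ᵥ u)) ^ ((k : ℝ) / 2) *
        (q / 2 * (2 * Real.pi) ^ (-(d : ℝ) / 2) * C.det ^ (-(1 : ℝ) / 2) *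
          (u ⬝ᵥ (C⁻¹ *ᵥ u)) ^ ((q / 2 - 1) * ((d : ℝ) / 2)) *
          Real.exp (-(1 / 2) * (u ⬝ᵥ (C⁻¹ *ᵥ u)) ^ (q / 2))) =
      2 ^ ((k : ℝ) / q) * Real.Gamma ((d : ℝ) / 2 + (k : ℝ) / q) /
        Real.Gamma ((d : ℝ) / 2) := by
  have hne : Nonempty (Fin d) := ⟨⟨0, hd⟩⟩
  have hdR : (0 : ℝ) < d := by exact_mod_cast hd
  rw [qED_change C hC (fun r => r ^ ((k : ℝ) / 2) *
        (q / 2 * (2 * Real.pi) ^ (-(d : ℝ) / 2) * C.det ^ (-(1 : ℝ) / 2) *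
          r ^ ((q / 2 - 1) * ((d : ℝ) / 2)) * Real.exp (-(1 / 2) * r ^ (q / 2))))]
  rw [integral_fun_norm_addHaar volume (fun y : ℝ => (y ^ 2) ^ ((k : ℝ) / 2) *
        (q / 2 * (2 * Real.pi) ^ (-(d : ℝ) / 2) * C.det ^ (-(1 : ℝ) / 2) *
          (y ^ 2) ^ ((q / 2 - 1) * ((d : ℝ) / 2)) * Real.exp (-(1 / 2) * (y ^ 2) ^ (q / 2))))]
  have hI : ∫ y in Set.Ioi (0 : ℝ), y ^ (Module.finrank ℝ (EuclideanSpace ℝ (Fin d)) - 1) •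
      ((y ^ 2) ^ ((k : ℝ) / 2) *
        (q / 2 * (2 * Real.pi) ^ (-(d : ℝ) / 2) * C.det ^ (-(1 : ℝ) / 2) *
          (y ^ 2) ^ ((q / 2 - 1) * ((d : ℝ) / 2)) * Real.exp (-(1 / 2) * (y ^ 2) ^ (q / 2)))) =
      (q / 2 * (2 * Real.pi) ^ (-(d : ℝ) / 2) * C.det ^ (-(1 : ℝ) / 2)) *
      ∫ y in Set.Ioi (0 : ℝ), y ^ (k + q * d / 2 - 1) * Real.exp (-(1 / 2) * y ^ q) := by
    rw [← integral_const_mul]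
    refine setIntegral_congr_fun measurableSet_Ioi fun y hy => ?_
    have hy : 0 < y := hy
    have e : ∀ a : ℝ, (y ^ 2) ^ a = y ^ (2 * a) := fun a => by
      rw [Real.rpow_mul hy.le, Real.rpow_two]
    have e3 : y ^ (k + q * d / 2 - 1) =
        y ^ ((d : ℝ) - 1) * y ^ (2 * ((k : ℝ) / 2)) * y ^ (2 * ((q / 2 - 1) * ((d : ℝ) / 2))) := by
      rw [← Real.rpow_add hy, ← Real.rpow_add hy]
      congr 1; ring
    have e4 : y ^ (d - 1) = y ^ ((d : ℝ) - 1) := by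
      rw [← Real.rpow_natCast, Nat.cast_sub hd, Nat.cast_one]
    simp only [finrank_euclideanSpace_fin, smul_eq_mul, e, e3, e4]
    rw [show 2 * (q / 2) = q by ring]
    ring
  have hpos : 0 < q * d / 2 := by positivity
  rw [hI, integral_rpow_mul_exp_neg_mul_rpow hq
    (by have : (0 : ℝ) ≤ k := k.cast_nonneg
        linarith) (by norm_num)]
  have hG : 0 < Real.Gamma ((d : ℝ) / 2) := Real.Gamma_pos_of_pos (by positivity)
  have hvol : (volume : Measure (EuclideanSpace ℝ (Fin d))).real (Metric.ball 0 1) =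
      π ^ ((d : ℝ) / 2) / ((d : ℝ) / 2 * Real.Gamma ((d : ℝ) / 2)) := by
    rw [Measure.real, EuclideanSpace.volume_ball, Fintype.card_fin,
      Real.Gamma_add_one (by positivity)]
    rw [ENNReal.ofReal_one, one_pow, one_mul, ENNReal.toReal_ofReal (by positivity)]
    congr 1
    rw [Real.sqrt_eq_rpow, ← Real.rpow_natCast, ← Real.rpow_mul pi_pos.le]
    congr 1; ring
  have hCp := hC.det_pos
  have hdd : C.det ^ ((1 : ℝ) / 2) * C.det ^ (-(1 : ℝ) / 2) = 1 := by
    rw [← Real.rpow_add hCp]; norm_num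
  have h2p : (2 * π) ^ (-(d : ℝ) / 2) = ((2 : ℝ) ^ ((d : ℝ) / 2))⁻¹ * (π ^ ((d : ℝ) / 2))⁻¹ := by
    rw [Real.mul_rpow (by norm_num) pi_pos.le, neg_div, Real.rpow_neg (by norm_num),
      Real.rpow_neg pi_pos.le]
  have harg : ((k : ℝ) + q * d / 2 - 1 + 1) / q = d / 2 + k / q := by field_simp; ring
  have hhalf : (1 / 2 : ℝ) ^ (-((k : ℝ) + q * d / 2 - 1 + 1) / q) =
      2 ^ ((d : ℝ) / 2) * 2 ^ ((k : ℝ) / q) := by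
    rw [neg_div, harg, one_div, Real.inv_rpow (by norm_num), Real.rpow_neg (by norm_num), inv_inv,
      Real.rpow_add (by norm_num)]
  rw [hvol, hhalf, harg, h2p, finrank_euclideanSpace_fin, nsmul_eq_mul, smul_eq_mul]
  have p1 : (0 : ℝ) < 2 ^ ((d : ℝ) / 2) := by positivity
  have p2 : (0 : ℝ) < π ^ ((d : ℝ) / 2) := by positivity
  generalize (2 : ℝ) ^ ((d : ℝ) / 2) = a at *
  generalize π ^ ((d : ℝ) / 2) = b at *
  generalize C.det ^ ((1 : ℝ) / 2) = s at *
  generalize C.det ^ (-(1 : ℝ) / 2) = t at *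
  generalize (2 : ℝ) ^ ((k : ℝ) / q) = c at *
  generalize Real.Gamma ((d : ℝ) / 2) = g at *
  generalize Real.Gamma ((d : ℝ) / 2 + k / q) = g2 at *
  field_simp
  linear_combination (c * g2) * hdd
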